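/- There exist an integral domain D with fraction field K and a polynomial P ∈ K[X,Y] in two variables satisfying P(a,b) ∈ D for all a, b ∈ D, such that P cannot be written as a finite sum ∑_{i=1}^{N} fᵢ(X)·hᵢ(Y) with f₁,…,f_N, h₁,…,h_N ∈ Int(D). Consequently the canonical map Int(D) ⊗_D Int(D) → Int(D²) is not surjective, and Int(D) admits no D-D-biring structure making the inclusion D[X] → Int(D) a biring homomorphism. -/

import Mathlib

/-!
The counterexample is `D = 𝔽₂ + u L[u]` for an infinite field `L` of characteristic two, with
`P = (X² - X)(Y² - Y) / u`.

For `a ∈ D` the constant term of `a² - a` vanishes because it is `c² - c` with `c ∈ 𝔽₂`. Hence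
`(a² - a)(b² - b)` lies in `u² L[u]`, and `P(a, b) ∈ u L[u] ⊆ D`.

The obstruction is the coefficient of the linear term: every `f ∈ Int(D)` has its coefficient of
`X` in `L[u]` (`coeff_one_mem_range`). Indeed `g(Y) = f(uY)` sends the infinite set `L` into
`D ⊆ L[u]`, so `g ∈ L[u][Y]` by Lagrange interpolation at nodes of `L`
(`exists_lift_of_eval_mem_range`). Its reduction modulo `u` is a polynomial over `L` taking only
values in `𝔽₂`, so it is constant, and the linear coefficient of `g`, which is `u` times that of
`f`, is divisible by `u`.

Consequently the coefficient of `XY` in `∑ fᵢ(X) hᵢ(Y)` with `fᵢ, hᵢ ∈ Int(D)` lies in `L[u]`,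
whereas the coefficient of `XY` in `P` is `1 / u`.
-/


open Polynomial

/-- `f ∈ K[X]` is an integer-valued polynomial on `D` (i.e. `f ∈ Int(D)`):
it maps every element of `D` into `D`. -/
def MemIntD (D : Type) [CommRing D] [IsDomain D] (f : Polynomial (FractionRing D)) : Prop :=
  ∀ d : D, f.eval (algebraMap D (FractionRing D) d) ∈ Set.range (algebraMap D (FractionRing D))

/-- The ring `𝔽₂ + u L[u]` of polynomials over `L` whose constant term lies in the prime field;
the variable `u` is `Polynomial.X`. -/
noncomputable def primeConstSubring (L : Type) [Field L] [Algebra (ZMod 2) L] :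
    Subring (Polynomial L) :=
  (algebraMap (ZMod 2) L).range.comap constantCoeff

section

variable {L : Type} [Field L] [Algebra (ZMod 2) L]

lemma X_mul_mem_primeConstSubring (q : Polynomial L) : X * q ∈ primeConstSubring L := by
  simp only [primeConstSubring, Subring.mem_comap]
  simp

lemma constantCoeff_sq_of_mem {p : Polynomial L} (hp : p ∈ primeConstSubring L) :
    constantCoeff p ^ 2 = constantCoeff p := by
  obtain ⟨z, hz⟩ := hp
  rw [← hz, ← map_pow]
  exact congrArg _ ((by decide : ∀ z : ZMod 2, z ^ 2 = z) z)

lemma X_dvd_sq_sub_self {p : Polynomial L} (hp : p ∈ primeConstSubring L) : X ∣ p ^ 2 - p := by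
  rw [X_dvd_iff]
  have := constantCoeff_sq_of_mem hp
  rw [← map_pow] at this
  simpa [sub_eq_zero] using this

/-- A polynomial over a field `E ⊇ L[u]` taking values in `L[u]` at all points of the infinite
field `L` has coefficients in `L[u]`: Lagrange interpolation at nodes of `L` involves no
denominators outside `L`. -/
lemma exists_lift_of_eval_mem_range {L : Type} [Field L] [Infinite L] {E : Type} [Field E]
    (ι : Polynomial L →+* E)
    (hι : Function.Injective ι) (g : Polynomial E)
    (hg : ∀ l : L, g.eval (ι (C l)) ∈ Set.range ι) :
    ∃ G : Polynomial (Polynomial L), G.map ι = g := by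
  classical
  choose p hp using hg
  obtain ⟨s, hs⟩ := Infinite.exists_subset_card_eq L (g.natDegree + 1)
  have hinj : Function.Injective (fun l : L => ι (C l)) := hι.comp C_injective
  refine ⟨∑ i ∈ s, C (p i) * (Lagrange.basis s id i).map C, ?_⟩
  have hs' : (s.image fun l : L => ι (C l)).card = g.natDegree + 1 := by
    rw [Finset.card_image_of_injective _ hinj, hs]
  refine Polynomial.eq_of_degrees_lt_of_eval_finset_eq (s.image fun l : L => ι (C l)) ?_ ?_ ?_
  · rw [hs', ← hs, Polynomial.map_sum]
    refine (degree_sum_le _ _).trans_lt ((Finset.sup_lt_iff (by simp)).2 fun i hi => ?_)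
    have hb : (Lagrange.basis s id i).degree < s.card := by
      rw [Lagrange.degree_basis (Function.injective_id.injOn) hi]
      exact_mod_cast Nat.sub_lt (Finset.card_pos.2 ⟨i, hi⟩) one_pos
    rw [Polynomial.map_mul, Polynomial.map_C]
    refine (degree_mul_le_of_le degree_C_le le_rfl).trans_lt ?_
    rw [zero_add]
    exact (degree_map_le.trans degree_map_le).trans_lt hb
  · rw [hs']
    exact degree_le_natDegree.trans_lt (by exact_mod_cast Nat.lt_succ_self _)
  · intro x hx
    obtain ⟨l, hl, rfl⟩ := Finset.mem_image.1 hx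
    rw [eval_map, eval₂_hom, eval_finsetSum, Finset.sum_eq_single l]
    · have h1 := Lagrange.eval_basis_self (Function.injective_id.injOn (s := (s : Set L))) hl
      simp only [id] at h1
      simp [eval_map, h1, hp]
    · intro i _ hil
      have h0 := Lagrange.eval_basis_of_ne (v := (id : L → L)) hil hl
      simp only [id] at h0
      simp [eval_map, h0]
    · exact fun h => absurd hl h

/-- A polynomial that maps `𝔽₂ + u L[u]` into itself has its linear coefficient in `L[u]`,
although its higher coefficients may involve powers of `1 / u`. -/
lemma coeff_one_mem_range [Infinite L] {E : Type} [Field E]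
    (ι : Polynomial L →+* E)
    (hι : Function.Injective ι) (F : Polynomial E)
    (hF : ∀ d ∈ primeConstSubring L, ∃ e ∈ primeConstSubring L, ι e = F.eval (ι d)) :
    F.coeff 1 ∈ ι.range := by
  have hev : ∀ l : L, (F.comp (C (ι X) * X)).eval (ι (C l)) = F.eval (ι (X * C l)) := by
    intro l; rw [mul_comm (X : Polynomial L)]; simp [mul_comm (ι X)]
  obtain ⟨G, hG⟩ := exists_lift_of_eval_mem_range ι hι (F.comp (C (ι X) * X)) (by
    intro l
    obtain ⟨e, -, he⟩ := hF _ (X_mul_mem_primeConstSubring (C l))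
    exact ⟨e, by rw [he, hev]⟩)
  -- The reduction of `F(uY)` modulo `u` takes idempotent values on `L`, so it is `0` or `1`.
  have hred : G.map constantCoeff * (G.map constantCoeff - 1) = 0 := by
    refine Polynomial.funext fun l => ?_
    obtain ⟨e, heD, he⟩ := hF _ (X_mul_mem_primeConstSubring (C l))
    have hGe : G.eval (C l) = e := hι (by
      rw [he, ← hev, ← hG, eval_map, eval₂_hom])
    have h1 : (G.map constantCoeff).eval l = constantCoeff e := by
      rw [← hGe, ← eval₂_hom, eval_map]; simp
    have h2 := constantCoeff_sq_of_mem heD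
    rw [eval_mul, eval_sub, h1, eval_one, eval_zero]
    linear_combination h2
  have hc : constantCoeff (G.coeff 1) = 0 := by
    rw [← coeff_map]
    rcases mul_eq_zero.1 hred with h | h
    · simp [h]
    · simp [sub_eq_zero.1 h, coeff_one]
  obtain ⟨q, hq⟩ : X ∣ G.coeff 1 := X_dvd_iff.2 hc
  refine ⟨q, mul_left_cancel₀ (a := ι X) ?_ ?_⟩
  · exact (map_ne_zero_iff ι hι).2 X_ne_zero
  · rw [← map_mul, ← hq, ← coeff_map, hG, comp_C_mul_X_coeff]
    simp [mul_comm]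

end

/-- The homomorphism `K[X, Y] → K[X][Y]`, used to read off the coefficient of `X Y`. -/
noncomputable def toIterated (K : Type) [Field K] :
    MvPolynomial (Fin 2) K →ₐ[K] Polynomial (Polynomial K) :=
  MvPolynomial.aeval ![C X, X]

lemma toIterated_prod_coeff {K : Type} [Field K] (f h : Polynomial K) :
    ((toIterated K (aeval (MvPolynomial.X (0 : Fin 2)) f *
      aeval (MvPolynomial.X (1 : Fin 2)) h)).coeff 1).coeff 1 = f.coeff 1 * h.coeff 1 := by
  have hf : aeval (C X : Polynomial (Polynomial K)) f = C f := by
    have : (C X : Polynomial (Polynomial K)) = algebraMap (Polynomial K) _ X := rfl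
    rw [this, aeval_algebraMap_apply, aeval_X_left_apply]; rfl
  have hh : aeval (X : Polynomial (Polynomial K)) h = h.map C := by
    rw [← eval₂_C_X (p := h.map C), eval₂_map]; rfl
  rw [map_mul, ← aeval_algHom_apply, ← aeval_algHom_apply]
  simp [toIterated, hf, hh]

/-- There exist an integral domain `D` with fraction field `K` and a two-variable
polynomial `P ∈ K[X,Y]` with `P(a,b) ∈ D` for all `a, b ∈ D` (i.e. `P ∈ Int(D²)`),
such that `P` is not a finite sum `∑ᵢ fᵢ(X)·hᵢ(Y)` with all `fᵢ, hᵢ ∈ Int(D)`.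
Consequently the canonical map `Int(D) ⊗_D Int(D) → Int(D²)` is not surjective, and
`Int(D)` admits no `D`-`D`-biring structure making `D[X] → Int(D)` a biring
homomorphism. -/
theorem intValued_two_variable_not_sum_of_products :
    ∃ (D : Type) (_ : CommRing D) (_ : IsDomain D)
      (P : MvPolynomial (Fin 2) (FractionRing D)),
      (∀ a b : D,
        MvPolynomial.eval
          (fun i : Fin 2 => if i = 0 then algebraMap D (FractionRing D) a
            else algebraMap D (FractionRing D) b) P
          ∈ Set.range (algebraMap D (FractionRing D))) ∧
      ¬ ∃ (N : ℕ) (f h : Fin N → Polynomial (FractionRing D)),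
          (∀ i, MemIntD D (f i)) ∧ (∀ i, MemIntD D (h i)) ∧
          P = ∑ i : Fin N,
            (Polynomial.aeval (MvPolynomial.X (0 : Fin 2)) (f i)) *
              (Polynomial.aeval (MvPolynomial.X (1 : Fin 2)) (h i)) := by
  -- Only these properties of `L` matter; forgetting its value keeps unification cheap.
  obtain ⟨L, _, _, _⟩ : ∃ (L : Type) (_ : Field L) (_ : Algebra (ZMod 2) L), Infinite L :=
    ⟨AlgebraicClosure (ZMod 2), inferInstance, inferInstance, inferInstance⟩
  let S := primeConstSubring L
  let K := FractionRing S
  let E := FractionRing (Polynomial L)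
  let ι : Polynomial L →+* E := algebraMap _ _
  have hι : Function.Injective ι := IsFractionRing.injective _ _
  have hιS : Function.Injective (ι.comp S.subtype) := hι.comp Subtype.val_injective
  let ψ : K →+* E := IsFractionRing.lift hιS
  have hψ : ∀ d : S, ψ (algebraMap S K d) = ι d := fun d => IsFractionRing.lift_algebraMap hιS d
  let u : S := ⟨X, by simpa using X_mul_mem_primeConstSubring (1 : Polynomial L)⟩
  have hu : algebraMap S K u ≠ 0 := by
    rw [Ne, IsFractionRing.to_map_eq_zero_iff]
    exact fun h => X_ne_zero (congrArg Subtype.val h)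
  refine ⟨S, inferInstance, inferInstance,
    MvPolynomial.C (algebraMap S K u)⁻¹ * ((MvPolynomial.X 0 ^ 2 - MvPolynomial.X 0) *
      (MvPolynomial.X 1 ^ 2 - MvPolynomial.X 1)), ?_, ?_⟩
  · intro a b
    obtain ⟨p, hp⟩ := X_dvd_sq_sub_self a.2
    obtain ⟨q, hq⟩ := X_dvd_sq_sub_self b.2
    refine ⟨⟨X * (p * q), X_mul_mem_primeConstSubring _⟩, ?_⟩
    have key : u * ⟨X * (p * q), X_mul_mem_primeConstSubring _⟩ =
        (a ^ 2 - a) * (b ^ 2 - b) := by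
      apply Subtype.ext
      change X * (X * (p * q)) = (a.1 ^ 2 - a.1) * (b.1 ^ 2 - b.1)
      rw [hp, hq]; ring
    have key' := congrArg (algebraMap S K) key
    simp only [map_mul, map_sub, map_pow] at key'
    simp only [map_mul, map_sub, map_pow, MvPolynomial.eval_C, MvPolynomial.eval_X]
    rw [eq_inv_mul_iff_mul_eq₀ hu]
    simpa using key'
  · rintro ⟨N, f, h, hf, hh, hP⟩
    have hint : ∀ F : Polynomial K, MemIntD S F → ψ (F.coeff 1) ∈ ι.range := by
      intro F hF
      rw [← coeff_map]
      refine coeff_one_mem_range ι hι (F.map ψ) fun d hd => ?_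
      obtain ⟨e, he⟩ := hF ⟨d, hd⟩
      refine ⟨e, e.2, ?_⟩
      rw [← hψ e, he, ← hψ ⟨d, hd⟩, eval_map, eval₂_hom]
    have hco := congrArg (fun Q => ((toIterated K Q).coeff 1).coeff 1) hP
    simp only [map_sum, finsetSum_coeff, toIterated_prod_coeff] at hco
    have hlhs : ((toIterated K (MvPolynomial.C (algebraMap S K u)⁻¹ *
        ((MvPolynomial.X 0 ^ 2 - MvPolynomial.X 0) *
          (MvPolynomial.X 1 ^ 2 - MvPolynomial.X 1)))).coeff 1).coeff 1 =
        (algebraMap S K u)⁻¹ := by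
      have hsplit : (MvPolynomial.C (algebraMap S K u)⁻¹ *
        ((MvPolynomial.X 0 ^ 2 - MvPolynomial.X 0) *
          (MvPolynomial.X 1 ^ 2 - MvPolynomial.X 1)) : MvPolynomial (Fin 2) K) =
          aeval (MvPolynomial.X (0 : Fin 2)) (C (algebraMap S K u)⁻¹ * (X ^ 2 - X)) *
          aeval (MvPolynomial.X (1 : Fin 2)) (X ^ 2 - X : Polynomial K) := by
        simp [MvPolynomial.algebraMap_eq, mul_assoc]
      rw [hsplit, toIterated_prod_coeff]
      simp [coeff_X_pow]
      ring
    rw [hlhs] at hco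
    have hmem : ψ (algebraMap S K u)⁻¹ ∈ ι.range := by
      rw [hco, map_sum]
      refine sum_mem fun i _ => ?_
      rw [map_mul]
      exact mul_mem (hint _ (hf i)) (hint _ (hh i))
    obtain ⟨q, hq⟩ := hmem
    rw [map_inv₀, hψ] at hq
    have hX : ι X ≠ 0 := (map_ne_zero_iff ι hι).2 X_ne_zero
    have h1 : X * q = 1 := hι (by rw [map_mul, hq, map_one]; exact mul_inv_cancel₀ hX)
    exact not_isUnit_X (IsUnit.of_mul_eq_one _ h1)
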